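/- arXiv:1404.1589 — 2 statements merged into one kernel-verified Lean document; each statement's English description precedes it below -/
import Mathlib

section
/- Let S be a proper *-semigroup. There is a unique A ∈ P(S)^∇ such that A = B^∇∇ for some ∇-finite B ∈ P(S)^⊥, while A^⊥ contains no ∇-finite *-annihilator other than {0} (i.e. every ∇-finite B ∈ P(S)^⊥ with B ⊆ A^⊥ equals {0}). -/
namespace Stmt10

/-- The *-annihilator `T^⊥`. -/
def pAnn {S : Type*} [Mul S] [Star S] [Zero S] (T : Set S) : Set S :=
  {s | ∀ t ∈ T, t * star s = 0 ∧ t * s = 0}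

/-- The annihilator ideal `T^∇`. -/
def nAnn {S : Type*} [Mul S] [Star S] [Zero S] (T : Set S) : Set S :=
  {s | ∀ t ∈ T, ∀ u : S, t * u * s = 0}

/-- `P(S)^⊥ = {T^⊥ : T ⊆ S}`. -/
def Pperp (S : Type*) [Mul S] [Star S] [Zero S] : Set (Set S) := {A | ∃ T : Set S, A = pAnn T}

/-- `P(S)^∇ = {T^∇ : T ⊆ S}`. -/
def Pnabla (S : Type*) [Mul S] [Star S] [Zero S] : Set (Set S) := {A | ∃ T : Set S, A = nAnn T}

/-- `A` is `∇`-finite: for every `B ∈ P(S)^⊥` with `B ⊆ A` and `B^∇ = A^∇`, `B = A`. -/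
def NablaFinite {S : Type*} [Mul S] [Star S] [Zero S] (A : Set S) : Prop :=
  ∀ B ∈ Pperp S, B ⊆ A → nAnn B = nAnn A → B = A

/-!
Write `I = J^∇` for an annihilator ideal. For every *-annihilator `C`, the set `(C ∩ I)^∇` depends
only on `C^∇`, and `T^⊥⊥ ∩ I ⊆ B` whenever `B` is a *-annihilator with `T ⊆ B ∪ I^∇`.
Consequently `C ↦ C ∩ I` preserves `∇`-finiteness, and if `s S t = 0` for `s`, `t` in distinct
members of a family of `∇`-finite *-annihilators, then each member `E` is recovered from the join
`B` of the family as `E = B ∩ E^∇∇`, which makes `B` itself `∇`-finite. The join of a maximal such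
family leaves no nonzero `∇`-finite *-annihilator inside `B^∇`, so `B^∇∇` has the two properties.

For uniqueness, `A^⊥ = A^∇` for `A ∈ P(S)^∇`. If it contains no nonzero `∇`-finite *-annihilator
and `B` is `∇`-finite, then `B ∩ A^∇ = {0}`, hence `B^∇∇ ⊆ A`.
-/

/-- Properness of an involution: `s* s = 0` only for `s = 0`. Encoded as a class so that instance
resolution supplies it to the lemmas below. -/
class IsProperStar (S : Type*) [Mul S] [Star S] [Zero S] : Prop where
  eq_zero_of_star_mul_self : ∀ s : S, star s * s = 0 → s = 0

/-- The relation `s S t = {0}`, whose polarity is `T ↦ T^∇`: membership `s ∈ nAnn T` unfolds to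
`∀ t ∈ T, NablaOrthogonal t s`. -/
def NablaOrthogonal {S : Type*} [Mul S] [Zero S] (s t : S) : Prop := ∀ u : S, s * u * t = 0

theorem exists_maximal_pairwise {α : Type*} (r : α → α → Prop) (P : Set α) :
    ∃ M : Set α, Maximal (fun M => M ⊆ P ∧ M.Pairwise r) M := by
  refine zorn_subset {M : Set α | M ⊆ P ∧ M.Pairwise r} fun c hc hchain =>
    ⟨⋃₀ c, ⟨Set.sUnion_subset fun M hM => (hc hM).1, ?_⟩, fun M => Set.subset_sUnion_of_mem⟩
  exact (Set.pairwise_sUnion hchain.directedOn).2 fun M hM => (hc hM).2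

section Basic

variable {S : Type*} [Mul S] [Star S] [Zero S] {A B T U : Set S}

theorem nAnn_anti (h : T ⊆ U) : nAnn U ⊆ nAnn T := fun _ hs t ht => hs t (h ht)

theorem pAnn_anti (h : T ⊆ U) : pAnn U ⊆ pAnn T := fun _ hs t ht => hs t (h ht)

theorem nAnn_union (T U : Set S) : nAnn (T ∪ U) = nAnn T ∩ nAnn U :=
  Set.ext fun _ => forall₂_or_left

theorem pAnn_union (T U : Set S) : pAnn (T ∪ U) = pAnn T ∩ pAnn U :=
  Set.ext fun _ => forall₂_or_left

theorem inter_mem_Pperp (hA : A ∈ Pperp S) (hB : B ∈ Pperp S) : A ∩ B ∈ Pperp S := by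
  obtain ⟨T, rfl⟩ := hA
  obtain ⟨U, rfl⟩ := hB
  exact ⟨T ∪ U, (pAnn_union T U).symm⟩

end Basic

section Ideal

variable {S : Type*} [SemigroupWithZero S]

theorem NablaOrthogonal.mul_left {s t : S} (h : NablaOrthogonal s t) (v : S) :
    NablaOrthogonal s (v * t) := fun u => by
  simpa only [mul_assoc] using h (u * v)

theorem NablaOrthogonal.mul_right {s t : S} (h : NablaOrthogonal s t) (v : S) :
    NablaOrthogonal s (t * v) := fun u => by
  rw [← mul_assoc, h, zero_mul]

variable [Star S] {T : Set S} {s : S}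

theorem mul_mem_nAnn_left (v : S) (h : s ∈ nAnn T) : v * s ∈ nAnn T :=
  fun t ht => NablaOrthogonal.mul_left (h t ht) v

theorem mul_mem_nAnn_right (h : s ∈ nAnn T) (v : S) : s * v ∈ nAnn T :=
  fun t ht => NablaOrthogonal.mul_right (h t ht) v

end Ideal

section StarMul

variable {S : Type*} [SemigroupWithZero S] [StarMul S] {B T : Set S} {b c s t w : S}

theorem star_eq_zero_iff : star s = 0 ↔ s = 0 := by
  have star_zero : star (0 : S) = 0 := MulOpposite.op_injective (map_zero starMulEquiv)
  rw [← star_inj, star_star, star_zero]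

theorem mul_star_eq_zero_comm : s * star t = 0 ↔ t * star s = 0 := by
  rw [← star_eq_zero_iff, star_mul, star_star]

theorem NablaOrthogonal.star_star (h : NablaOrthogonal s t) :
    NablaOrthogonal (star t) (star s) := fun u => by
  have := star_eq_zero_iff.2 (h (star u))
  simpa only [star_mul, _root_.star_star, mul_assoc] using this

theorem star_mem_pAnn (h : s ∈ pAnn T) : star s ∈ pAnn T := fun t ht =>
  ⟨by rw [star_star]; exact (h t ht).2, (h t ht).1⟩

theorem star_mem_of_mem_Pperp (hB : B ∈ Pperp S) (hb : b ∈ B) : star b ∈ B := by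
  obtain ⟨T, rfl⟩ := hB
  exact star_mem_pAnn hb

theorem mul_mul_mem_of_mem_Pperp (hB : B ∈ Pperp S) (hb : b ∈ B) (v : S) (hc : c ∈ B) :
    b * v * c ∈ B := by
  obtain ⟨T, rfl⟩ := hB
  refine fun t ht => ⟨?_, ?_⟩
  · rw [star_mul, ← mul_assoc, (hc t ht).1, zero_mul]
  · rw [← mul_assoc, ← mul_assoc, (hb t ht).2, zero_mul, zero_mul]

theorem zero_mem_of_mem_Pperp (hB : B ∈ Pperp S) : (0 : S) ∈ B := by
  obtain ⟨T, rfl⟩ := hB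
  exact fun t _ => ⟨by rw [star_eq_zero_iff.2 rfl, mul_zero], mul_zero t⟩

theorem mul_star_self_mem_pAnn (h : ∀ t ∈ T, t * w = 0) : w * star w ∈ pAnn T := fun t ht => by
  have htw : t * (w * star w) = 0 := by rw [← mul_assoc, h t ht, zero_mul]
  exact ⟨by rwa [star_mul, star_star], htw⟩

theorem star_mul_self_mem_pAnn_pAnn (ht : t ∈ T) : star t * t ∈ pAnn (pAnn T) := by
  have hstar : ∀ s ∈ pAnn T, s * star t = 0 := fun s hs => mul_star_eq_zero_comm.1 (hs t ht).1
  simpa only [star_star] using mul_star_self_mem_pAnn hstar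

theorem subset_pAnn_pAnn (hT : ∀ t ∈ T, star t ∈ T) : T ⊆ pAnn (pAnn T) := fun t ht s hs =>
  ⟨mul_star_eq_zero_comm.1 (hs t ht).1,
    by simpa only [star_star] using mul_star_eq_zero_comm.1 (hs (star t) (hT t ht)).1⟩

end StarMul

section Proper

variable {S : Type*} [SemigroupWithZero S] [StarMul S] [IsProperStar S]
  {A B C D J T : Set S} {c p s t x : S}

theorem mul_eq_zero_of_star_mul_self_mul_eq_zero (h : star p * p * x = 0) : p * x = 0 := by
  apply IsProperStar.eq_zero_of_star_mul_self
  rw [star_mul, mul_assoc, ← mul_assoc (star p), h, mul_zero]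

theorem eq_zero_of_mul_star_mul_self (h : s * star s * s = 0) : s = 0 := by
  apply IsProperStar.eq_zero_of_star_mul_self
  apply mul_eq_zero_of_star_mul_self_mul_eq_zero
  rwa [star_star]

namespace NablaOrthogonal

theorem star_left (h : NablaOrthogonal s t) : NablaOrthogonal (star s) t := fun u => by
  apply IsProperStar.eq_zero_of_star_mul_self
  calc star (star s * u * t) * (star s * u * t)
      = star t * star u * (s * (star s * u) * t) := by
        simp only [star_mul, _root_.star_star, mul_assoc]
    _ = 0 := by rw [h, mul_zero]

theorem symm (h : NablaOrthogonal s t) : NablaOrthogonal t s := by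
  simpa only [_root_.star_star] using h.star_left.star_star.star_left

theorem mul_eq_zero (h : NablaOrthogonal s t) : s * t = 0 := by
  apply eq_zero_of_mul_star_mul_self
  simpa only [star_mul, mul_assoc] using h (t * star (s * t) * s)

theorem eq_zero (h : NablaOrthogonal s s) : s = 0 :=
  IsProperStar.eq_zero_of_star_mul_self s h.star_left.mul_eq_zero

end NablaOrthogonal

theorem subset_nAnn_comm : A ⊆ nAnn B ↔ B ⊆ nAnn A :=
  ⟨fun h b hb _ ha => NablaOrthogonal.symm (h ha b hb),
    fun h a ha _ hb => NablaOrthogonal.symm (h hb a ha)⟩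

theorem subset_nAnn_nAnn (T : Set S) : T ⊆ nAnn (nAnn T) :=
  subset_nAnn_comm.1 subset_rfl

theorem nAnn_nAnn_nAnn (T : Set S) : nAnn (nAnn (nAnn T)) = nAnn T :=
  (nAnn_anti (subset_nAnn_nAnn T)).antisymm (subset_nAnn_nAnn _)

theorem nAnn_nAnn_of_mem_Pnabla (hA : A ∈ Pnabla S) : nAnn (nAnn A) = A := by
  obtain ⟨T, rfl⟩ := hA
  exact nAnn_nAnn_nAnn T

theorem pAnn_pAnn_pAnn (T : Set S) : pAnn (pAnn (pAnn T)) = pAnn T := by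
  refine Set.Subset.antisymm (fun s hs t ht => ?_) (subset_pAnn_pAnn fun _ => star_mem_pAnn)
  have hst := hs (star t * t) (star_mul_self_mem_pAnn_pAnn ht)
  exact ⟨mul_eq_zero_of_star_mul_self_mul_eq_zero hst.1,
    mul_eq_zero_of_star_mul_self_mul_eq_zero hst.2⟩

theorem pAnn_pAnn_of_mem_Pperp (hB : B ∈ Pperp S) : pAnn (pAnn B) = B := by
  obtain ⟨T, rfl⟩ := hB
  exact pAnn_pAnn_pAnn T

theorem pAnn_pAnn_subset_of_mem_Pperp (hB : B ∈ Pperp S) (h : T ⊆ B) : pAnn (pAnn T) ⊆ B :=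
  (pAnn_anti (pAnn_anti h)).trans (pAnn_pAnn_of_mem_Pperp hB).subset

theorem nAnn_subset_pAnn (T : Set S) : nAnn T ⊆ pAnn T := fun s hs t ht =>
  have hts : NablaOrthogonal t s := hs t ht
  ⟨mul_star_eq_zero_comm.1 hts.star_left.symm.mul_eq_zero, hts.mul_eq_zero⟩

theorem pAnn_nAnn (T : Set S) : pAnn (nAnn T) = nAnn (nAnn T) :=
  Set.Subset.antisymm (fun _ hs t ht u => (hs (t * u) (mul_mem_nAnn_right ht u)).2)
    (nAnn_subset_pAnn _)

theorem pAnn_of_mem_Pnabla (hA : A ∈ Pnabla S) : pAnn A = nAnn A := by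
  obtain ⟨T, rfl⟩ := hA
  exact pAnn_nAnn T

theorem nAnn_mem_Pperp (T : Set S) : nAnn T ∈ Pperp S :=
  ⟨nAnn (nAnn T), by rw [pAnn_nAnn, nAnn_nAnn_nAnn]⟩

theorem nAnn_pAnn_pAnn (T : Set S) : nAnn (pAnn (pAnn T)) = nAnn T := by
  refine Set.Subset.antisymm (fun x hx t ht u => ?_) ?_
  · have := hx (star t * t) (star_mul_self_mem_pAnn_pAnn ht) u
    rw [mul_assoc] at this ⊢
    exact mul_eq_zero_of_star_mul_self_mul_eq_zero this
  · rw [subset_nAnn_comm, ← pAnn_nAnn]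
    exact pAnn_anti (nAnn_subset_pAnn T)

theorem pAnn_pAnn_inter_nAnn_subset (hB : B ∈ Pperp S) (hT : T ⊆ B ∪ nAnn (nAnn J)) :
    pAnn (pAnn T) ∩ nAnn J ⊆ B := by
  have mul_eq_zero_of_mem {x y : S} (hx : x ∈ pAnn (pAnn T)) (hxJ : x ∈ nAnn J)
      (hy : y ∈ pAnn B) : y * x = 0 := by
    -- `w = y* y x` is killed on the left by `B` because of `y`, and by `J^∇∇` because of `x`.
    set w := star y * y * x with hw
    have hTw : ∀ t ∈ T, t * w = 0 := by
      intro t ht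
      rcases hT ht with htB | htJ
      · rw [hw, ← mul_assoc, ← mul_assoc, (hy t htB).1, zero_mul, zero_mul]
      · exact (NablaOrthogonal.symm (htJ w (mul_mem_nAnn_left _ hxJ))).mul_eq_zero
    have hwx : star w * x = 0 := by
      apply mul_eq_zero_of_star_mul_self_mul_eq_zero
      rw [star_star]
      exact (hx _ (mul_star_self_mem_pAnn hTw)).2
    apply IsProperStar.eq_zero_of_star_mul_self
    simpa only [hw, star_mul, star_star, mul_assoc] using hwx
  rintro x ⟨hx, hxJ⟩
  rw [← pAnn_pAnn_of_mem_Pperp hB]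
  exact fun y hy => ⟨mul_eq_zero_of_mem (star_mem_pAnn hx)
    (star_mem_of_mem_Pperp (nAnn_mem_Pperp J) hxJ) hy, mul_eq_zero_of_mem hx hxJ hy⟩

theorem mul_mul_mem_nAnn_nAnn_of_mem_nAnn_inter (hC : C ∈ Pperp S) (hc : c ∈ C) (u : S)
    (hx : x ∈ nAnn (C ∩ nAnn J)) : c * u * x ∈ nAnn (nAnn J) := by
  intro w hw v
  have hmem : star (w * v * c) * (w * v * c) ∈ C ∩ nAnn J := by
    constructor
    · simpa only [star_mul, mul_assoc] using
        mul_mul_mem_of_mem_Pperp hC (star_mem_of_mem_Pperp hC hc) (star (w * v) * (w * v)) hc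
    · exact mul_mem_nAnn_left _ (mul_mem_nAnn_right (mul_mem_nAnn_right hw v) c)
  have := mul_eq_zero_of_star_mul_self_mul_eq_zero (x := u * x)
    ((mul_assoc _ _ _).symm.trans (hx _ hmem u))
  simpa only [mul_assoc] using this

theorem nAnn_inter_nAnn_mono (hC : C ∈ Pperp S) (h : nAnn C ⊆ nAnn D) :
    nAnn (C ∩ nAnn J) ⊆ nAnn (D ∩ nAnn J) := by
  rintro x hx d ⟨hdD, hdJ⟩ u
  have hmem : x * star (d * u * x) * d ∈ nAnn C := fun c hc v => by
    have hcd : NablaOrthogonal (c * v * x) d :=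
      NablaOrthogonal.symm (mul_mul_mem_nAnn_nAnn_of_mem_nAnn_inter hC hc v hx d hdJ)
    simpa only [mul_assoc] using hcd (star (d * u * x))
  apply eq_zero_of_mul_star_mul_self
  calc d * u * x * star (d * u * x) * (d * u * x)
      = d * u * (x * star (d * u * x) * d) * (u * x) := by simp only [mul_assoc]
    _ = 0 := by rw [h hmem d hdD u, zero_mul]

theorem nAnn_inter_nAnn_congr (hC : C ∈ Pperp S) (hD : D ∈ Pperp S) (h : nAnn C = nAnn D) :
    nAnn (C ∩ nAnn J) = nAnn (D ∩ nAnn J) :=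
  (nAnn_inter_nAnn_mono hC h.subset).antisymm (nAnn_inter_nAnn_mono hD h.superset)

theorem nAnn_inter_nAnn_inter_compl (hB : B ∈ Pperp S) (J : Set S) :
    nAnn (B ∩ nAnn J) ∩ nAnn (B ∩ nAnn (nAnn J)) = nAnn B := by
  refine Set.Subset.antisymm ?_
    (Set.subset_inter (nAnn_anti Set.inter_subset_left) (nAnn_anti Set.inter_subset_left))
  rintro x ⟨hx, hx'⟩ b hb u
  have hmem : b * u * x ∈ nAnn (nAnn J) := mul_mul_mem_nAnn_nAnn_of_mem_nAnn_inter hB hb u hx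
  exact NablaOrthogonal.eq_zero
    (mul_mul_mem_nAnn_nAnn_of_mem_nAnn_inter hB hb u hx' _ hmem)

theorem NablaFinite.inter_nAnn (hfin : NablaFinite B) (hB : B ∈ Pperp S) (J : Set S) :
    NablaFinite (B ∩ nAnn J) := by
  intro C hC hCB hCn
  have hTB : C ∪ B ∩ nAnn (nAnn J) ⊆ B :=
    Set.union_subset (hCB.trans Set.inter_subset_left) Set.inter_subset_left
  have hjoin : pAnn (pAnn (C ∪ B ∩ nAnn (nAnn J))) = B := by
    apply hfin _ ⟨_, rfl⟩ (pAnn_pAnn_subset_of_mem_Pperp hB hTB)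
    rw [nAnn_pAnn_pAnn, nAnn_union, hCn, nAnn_inter_nAnn_inter_compl hB]
  refine hCB.antisymm ?_
  nth_rw 1 [← hjoin]
  exact pAnn_pAnn_inter_nAnn_subset hC (Set.union_subset_union_right C Set.inter_subset_right)

theorem nAnn_nAnn_subset_of_forall_nablaFinite (hA : A ∈ Pnabla S)
    (hAfin : ∀ E ∈ Pperp S, NablaFinite E → E ⊆ pAnn A → E = {0})
    (hB : B ∈ Pperp S) (hBfin : NablaFinite B) : nAnn (nAnn B) ⊆ A := by
  have hinter : B ∩ nAnn A = {0} := hAfin _ (inter_mem_Pperp hB (nAnn_mem_Pperp A))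
    (hBfin.inter_nAnn hB A) (Set.inter_subset_right.trans (nAnn_subset_pAnn A))
  have hsub : nAnn A ⊆ nAnn B := by
    rw [← nAnn_inter_nAnn_inter_compl hB A, hinter,
      nAnn_nAnn_of_mem_Pnabla hA]
    refine Set.subset_inter (fun x _ t ht u => ?_) (nAnn_anti Set.inter_subset_right)
    rw [Set.mem_singleton_iff.1 ht, zero_mul, zero_mul]
  exact (nAnn_anti hsub).trans (nAnn_nAnn_of_mem_Pnabla hA).subset

section Family

variable {M : Set (Set S)} {E : Set S}

theorem subset_pAnn_pAnn_sUnion (hE : E ∈ Pperp S) (hEM : E ∈ M) : E ⊆ pAnn (pAnn (⋃₀ M)) :=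
  (pAnn_pAnn_of_mem_Pperp hE).superset.trans
    (pAnn_anti (pAnn_anti (Set.subset_sUnion_of_mem hEM)))

theorem pAnn_pAnn_sUnion_inter_nAnn_nAnn (hM : M.Pairwise fun E F => E ⊆ nAnn F)
    (hE : E ∈ Pperp S) (hEM : E ∈ M) : pAnn (pAnn (⋃₀ M)) ∩ nAnn (nAnn E) = E := by
  refine Set.Subset.antisymm (pAnn_pAnn_inter_nAnn_subset hE ?_)
    (Set.subset_inter (subset_pAnn_pAnn_sUnion hE hEM) (subset_nAnn_nAnn E))
  rw [nAnn_nAnn_nAnn]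
  rintro x ⟨F, hF, hxF⟩
  obtain rfl | hFE := eq_or_ne F E
  · exact Or.inl hxF
  · exact Or.inr (hM hF hEM hFE hxF)

theorem nablaFinite_pAnn_pAnn_sUnion (hMP : M ⊆ {E | E ∈ Pperp S ∧ NablaFinite E})
    (hM : M.Pairwise fun E F => E ⊆ nAnn F) : NablaFinite (pAnn (pAnn (⋃₀ M))) := by
  intro C hC hCB hCn
  refine hCB.antisymm (pAnn_pAnn_subset_of_mem_Pperp hC (Set.sUnion_subset fun E hEM => ?_))
  obtain ⟨hE, hEfin⟩ := hMP hEM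
  have hjoin := pAnn_pAnn_sUnion_inter_nAnn_nAnn hM hE hEM
  have hCE : C ∩ nAnn (nAnn E) = E := by
    apply hEfin _ (inter_mem_Pperp hC (nAnn_mem_Pperp _))
    · exact (Set.inter_subset_inter_left _ hCB).trans hjoin.subset
    · rw [nAnn_inter_nAnn_congr hC ⟨_, rfl⟩ hCn, hjoin]
  exact hCE.superset.trans Set.inter_subset_left

theorem eq_singleton_zero_of_subset_nAnn_sUnion
    (hM : Maximal
      (fun M => M ⊆ {E | E ∈ Pperp S ∧ NablaFinite E} ∧ M.Pairwise fun E F => E ⊆ nAnn F) M)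
    (hE : E ∈ Pperp S) (hEfin : NablaFinite E) (hEM : E ⊆ nAnn (⋃₀ M)) : E = {0} := by
  have hEF : ∀ F ∈ M, E ⊆ nAnn F := fun F hF =>
    hEM.trans (nAnn_anti (Set.subset_sUnion_of_mem hF))
  have hmem : E ∈ M := hM.mem_of_prop_insert
    ⟨Set.insert_subset ⟨hE, hEfin⟩ hM.prop.1,
      hM.prop.2.insert fun F hF _ => ⟨hEF F hF, subset_nAnn_comm.1 (hEF F hF)⟩⟩
  exact Set.eq_singleton_iff_unique_mem.2
    ⟨zero_mem_of_mem_Pperp hE, fun e he => NablaOrthogonal.eq_zero (hEF E hmem he e he)⟩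

end Family

variable (S) in
theorem exists_nablaFinite_forall_subset_nAnn_eq_singleton_zero :
    ∃ B ∈ Pperp S, NablaFinite B ∧
      ∀ E ∈ Pperp S, NablaFinite E → E ⊆ nAnn B → E = {0} := by
  obtain ⟨M, hM⟩ := exists_maximal_pairwise (fun E F : Set S => E ⊆ nAnn F)
    {E | E ∈ Pperp S ∧ NablaFinite E}
  refine ⟨_, ⟨_, rfl⟩, nablaFinite_pAnn_pAnn_sUnion hM.prop.1 hM.prop.2, ?_⟩
  rw [nAnn_pAnn_pAnn]
  exact fun E => eq_singleton_zero_of_subset_nAnn_sUnion hM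

end Proper

/-- Let `S` be a proper *-semigroup.  There is a unique
`A ∈ P(S)^∇` such that `A = B^∇∇` for some `∇`-finite `B ∈ P(S)^⊥`, while `A^⊥`
contains no `∇`-finite *-annihilator other than `{0}`. -/
theorem stmt_10 {S : Type*} [SemigroupWithZero S] [StarMul S]
    (hproper : ∀ s : S, star s * s = 0 → s = 0) :
    ∃! A : Set S, A ∈ Pnabla S ∧
      (∃ B ∈ Pperp S, NablaFinite B ∧ A = nAnn (nAnn B)) ∧
      (∀ B ∈ Pperp S, NablaFinite B → B ⊆ pAnn A → B = {0}) := by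
  have : IsProperStar S := ⟨hproper⟩
  obtain ⟨B, hB, hBfin, hBmax⟩ := exists_nablaFinite_forall_subset_nAnn_eq_singleton_zero S
  have hmem : nAnn (nAnn B) ∈ Pnabla S := ⟨_, rfl⟩
  have hmax : ∀ E ∈ Pperp S, NablaFinite E → E ⊆ pAnn (nAnn (nAnn B)) → E = {0} := by
    rwa [pAnn_of_mem_Pnabla hmem, nAnn_nAnn_nAnn]
  refine ⟨nAnn (nAnn B), ⟨hmem, ⟨B, hB, hBfin, rfl⟩, hmax⟩, ?_⟩
  rintro A ⟨hA, ⟨B', hB', hB'fin, rfl⟩, hAmax⟩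
  exact (nAnn_nAnn_subset_of_forall_nablaFinite hmem hmax hB' hB'fin).antisymm
    (nAnn_nAnn_subset_of_forall_nablaFinite hA hAmax hB hBfin)

end Stmt10
end

section
/- Let S be a proper *-semigroup and a, b ∈ S. Then {a b}^⊥⊥ = ({a}^⊥⊥ b)^⊥⊥, where {a}^⊥⊥ b = {x b : x ∈ {a}^⊥⊥}. Moreover, if {a}^⊥⊥ ⊆ {b*}^⊥⊥ then {b* a*}^⊥⊥ = {a*}^⊥⊥; in particular the element a b then witnesses {a*}^⊥⊥ ∼ ({a}^⊥⊥ b)^⊥⊥. -/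
namespace Stmt12

/-- The *-annihilator `T^⊥`. -/
def pAnn {S : Type*} [Mul S] [Star S] [Zero S] (T : Set S) : Set S :=
  {s | ∀ t ∈ T, t * star s = 0 ∧ t * s = 0}

/-- `A ∼ B`: there is `s ∈ S` with `{s}^⊥⊥ = A` and `{s*}^⊥⊥ = B`. -/
def Sim {S : Type*} [Mul S] [Star S] [Zero S] (A B : Set S) : Prop :=
  ∃ s : S, pAnn (pAnn {s}) = A ∧ pAnn (pAnn {star s}) = B

/-!
Passing to `T^⊥⊥` does not change the right annihilator `r(T) = {u | T u = 0}`: an element `t ∈ T`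
need not lie in `T^⊥⊥`, but `t* t` does, and properness cancels `t*` in `t* t u = 0`; conversely, if
`T u = 0`, then `u u* ∈ T^⊥`, so `x u u* = 0` for `x ∈ T^⊥⊥`, and properness cancels `u*`. Since
`T^⊥` depends only on `r(T)`, and `r(T b) = {u | b u ∈ r(T)}`, this gives `(T b)^⊥ = (T^⊥⊥ b)^⊥`.
If `{a}^⊥⊥ ⊆ {b*}^⊥⊥`, then `r(b*) ⊆ r(a)`, so `b* a* u = 0` implies `a a* u = 0`, hence `a* u = 0`.
-/

section RightAnnihilator

variable {S : Type*}

/-- The right annihilator `{u | T u = 0}` of a set `T`, through which `T^⊥` is computed: an element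
lies in `T^⊥` when both it and its adjoint lie in `rightAnn T`. -/
def rightAnn [Mul S] [Zero S] (T : Set S) : Set S :=
  {u | ∀ t ∈ T, t * u = 0}

@[simp]
theorem mem_rightAnn_singleton [Mul S] [Zero S] {a u : S} : u ∈ rightAnn {a} ↔ a * u = 0 := by
  simp [rightAnn]

theorem rightAnn_anti [Mul S] [Zero S] {T U : Set S} (h : T ⊆ U) : rightAnn U ⊆ rightAnn T :=
  fun _ hu t ht => hu t (h ht)

theorem rightAnn_image_mul_right [Semigroup S] [Zero S] (T : Set S) (b : S) :
    rightAnn ((fun x => x * b) '' T) = (fun u => b * u) ⁻¹' rightAnn T := by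
  ext u
  simp only [rightAnn, Set.forall_mem_image, Set.mem_ofPred_eq, Set.preimage_ofPred_eq, mul_assoc]

theorem mul_right_mem_rightAnn [SemigroupWithZero S] {T : Set S} {u : S} (hu : u ∈ rightAnn T)
    (v : S) : u * v ∈ rightAnn T := fun t ht => by
  rw [← mul_assoc, hu t ht, zero_mul]

end RightAnnihilator

section Annihilator

variable {S : Type*} [Mul S] [Star S] [Zero S] {T U : Set S} {s : S}

theorem mem_pAnn_iff : s ∈ pAnn T ↔ star s ∈ rightAnn T ∧ s ∈ rightAnn T :=
  forall₂_and

theorem mem_pAnn_iff_of_star_eq (hs : star s = s) : s ∈ pAnn T ↔ s ∈ rightAnn T := by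
  rw [mem_pAnn_iff, hs, and_self]

theorem pAnn_eq_of_rightAnn_eq (h : rightAnn T = rightAnn U) : pAnn T = pAnn U := by
  ext s
  rw [mem_pAnn_iff, mem_pAnn_iff, h]

end Annihilator

section Involution

theorem star_eq_zero_iff {S : Type*} [MulZeroClass S] [StarMul S] {s : S} :
    star s = 0 ↔ s = 0 :=
  (MulOpposite.op_eq_zero_iff _).symm.trans (map_eq_zero_iff starMulEquiv starMulEquiv.injective)

theorem mul_star_eq_zero_comm {S : Type*} [MulZeroClass S] [StarMul S] {s t : S} :
    s * star t = 0 ↔ t * star s = 0 := by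
  rw [← star_eq_zero_iff, star_mul, star_star]

theorem star_mul_self_mem_pAnn_pAnn {S : Type*} [SemigroupWithZero S] [StarMul S] {T : Set S}
    {t : S} (ht : t ∈ T) : star t * t ∈ pAnn (pAnn T) := by
  refine (mem_pAnn_iff_of_star_eq (IsSelfAdjoint.star_mul_self t)).2 fun s hs => ?_
  have hst : s * star t = 0 := mul_star_eq_zero_comm.1 (hs t ht).1
  rw [← mul_assoc, hst, zero_mul]

end Involution

/-- The properness condition on a *-semigroup with zero: `s* s = 0` only for `s = 0`. It provides
the cancellation laws behind the invariance of right annihilators under `T ↦ T^⊥⊥`. -/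
def IsProper (S : Type*) [Mul S] [Star S] [Zero S] : Prop :=
  ∀ s : S, star s * s = 0 → s = 0

namespace IsProper

variable {S : Type*} [SemigroupWithZero S] [StarMul S]

theorem star_mul_mul_eq_zero_iff (hS : IsProper S) {x y : S} :
    star x * (x * y) = 0 ↔ x * y = 0 := by
  refine ⟨fun h => hS _ ?_, fun h => by rw [h, mul_zero]⟩
  rw [star_mul, mul_assoc, h, mul_zero]

theorem mul_mul_star_eq_zero_iff (hS : IsProper S) {x y : S} :
    x * (y * star y) = 0 ↔ x * y = 0 := by
  have h := hS.star_mul_mul_eq_zero_iff (x := star y) (y := star x)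
  rwa [← star_mul, ← star_mul, star_eq_zero_iff, star_eq_zero_iff, mul_assoc] at h

theorem rightAnn_pAnn_pAnn (hS : IsProper S) (T : Set S) :
    rightAnn (pAnn (pAnn T)) = rightAnn T := by
  refine Set.Subset.antisymm (fun u hu t ht => ?_) (fun u hu x hx => ?_)
  · have htu : star t * t * u = 0 := hu _ (star_mul_self_mem_pAnn_pAnn ht)
    rwa [mul_assoc, hS.star_mul_mul_eq_zero_iff] at htu
  · have hsa : star (u * star u) = u * star u := IsSelfAdjoint.mul_star_self u
    have hmem : u * star u ∈ pAnn T :=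
      (mem_pAnn_iff_of_star_eq hsa).2 (mul_right_mem_rightAnn hu (star u))
    have hxu : u * star u * star x = 0 := (hx _ hmem).1
    rwa [mul_star_eq_zero_comm, hsa, hS.mul_mul_star_eq_zero_iff] at hxu

theorem pAnn_image_mul_right_pAnn_pAnn (hS : IsProper S) (T : Set S) (b : S) :
    pAnn ((fun x => x * b) '' pAnn (pAnn T)) = pAnn ((fun x => x * b) '' T) := by
  apply pAnn_eq_of_rightAnn_eq
  rw [rightAnn_image_mul_right, rightAnn_image_mul_right, hS.rightAnn_pAnn_pAnn]

theorem rightAnn_subset_of_pAnn_pAnn_subset (hS : IsProper S) {T U : Set S}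
    (h : pAnn (pAnn T) ⊆ pAnn (pAnn U)) : rightAnn U ⊆ rightAnn T := by
  simpa only [hS.rightAnn_pAnn_pAnn] using rightAnn_anti h

theorem rightAnn_mul_star_eq (hS : IsProper S) {a c : S} (h : rightAnn {c} ⊆ rightAnn {a}) :
    rightAnn {c * star a} = rightAnn {star a} := by
  ext u
  rw [mem_rightAnn_singleton, mem_rightAnn_singleton, mul_assoc]
  refine ⟨fun hu => ?_, fun hu => by rw [hu, mul_zero]⟩
  have hau : a * (star a * u) = 0 := mem_rightAnn_singleton.1 (h (mem_rightAnn_singleton.2 hu))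
  exact hS.star_mul_mul_eq_zero_iff.1 (by rwa [star_star])

theorem pAnn_mul_star_eq (hS : IsProper S) {a c : S}
    (h : pAnn (pAnn {a}) ⊆ pAnn (pAnn {c})) : pAnn {c * star a} = pAnn {star a} :=
  pAnn_eq_of_rightAnn_eq (hS.rightAnn_mul_star_eq (hS.rightAnn_subset_of_pAnn_pAnn_subset h))

end IsProper

/-- Let `S` be a proper *-semigroup and `a b ∈ S`.  Then
`{a b}^⊥⊥ = ({a}^⊥⊥ b)^⊥⊥`.  Moreover, if `{a}^⊥⊥ ⊆ {b*}^⊥⊥` then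
`{b* a*}^⊥⊥ = {a*}^⊥⊥`; in particular `{a*}^⊥⊥ ∼ ({a}^⊥⊥ b)^⊥⊥`. -/
theorem stmt_12 {S : Type*} [SemigroupWithZero S] [StarMul S]
    (hproper : ∀ s : S, star s * s = 0 → s = 0) (a b : S) :
    pAnn (pAnn {a * b}) = pAnn (pAnn ((fun x => x * b) '' pAnn (pAnn {a}))) ∧
    (pAnn (pAnn {a}) ⊆ pAnn (pAnn {star b}) →
      pAnn (pAnn {star b * star a}) = pAnn (pAnn {star a}) ∧
      Sim (pAnn (pAnn ({star a} : Set S)))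
        (pAnn (pAnn ((fun x => x * b) '' pAnn (pAnn {a}))))) := by
  have hS : IsProper S := hproper
  have hab : pAnn (pAnn {a * b}) = pAnn (pAnn ((fun x => x * b) '' pAnn (pAnn {a}))) := by
    rw [hS.pAnn_image_mul_right_pAnn_pAnn, Set.image_singleton]
  refine ⟨hab, fun hsub => ?_⟩
  have hba : pAnn (pAnn {star b * star a}) = pAnn (pAnn {star a}) :=
    congrArg pAnn (hS.pAnn_mul_star_eq hsub)
  refine ⟨hba, star (a * b), ?_, ?_⟩
  · rwa [star_mul]
  · rwa [star_star]

end Stmt12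
end
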